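/- Let (T, l) be a labeled tree with non-degenerate labeling l : V(T) → ℝ≥0. Then the following statements are equivalent: (i) the ultrametric space (V(T), d_l) is locally finite; (ii) for every ray R that is a subgraph of T and every star graph S that is a subgraph of T, the ultrametric subspaces (V(R), d_l restricted to V(R) × V(R)) and (V(S), d_l restricted to V(S) × V(S)) are locally finite. -/

import Mathlib

open SimpleGraph

/-- For a tree `G` with labeling `l`, the "ultrametric" `d_l`: the maximum of the labels of the
vertices of the unique path joining `u` and `v` (and `0` if `u = v`). -/
noncomputable def treeDist {V : Type*} (G : SimpleGraph V) (hG : G.IsTree) (l : V → NNReal)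
    (u v : V) : NNReal :=
  letI := Classical.decEq V
  if u = v then 0 else ((hG.existsUnique_path u v).choose.support.map l).foldr max 0

/-- A labeling is non-degenerate if `max {l u, l v} > 0` for every edge `{u, v}`. -/
def Nondeg {V : Type*} (G : SimpleGraph V) (l : V → NNReal) : Prop :=
  ∀ u v : V, G.Adj u v → 0 < max (l u) (l v)

/-- A distance function is separable if there is a countable dense subset. -/
def SeparableWith {α : Type*} (d : α → α → NNReal) : Prop :=
  ∃ S : Set α, S.Countable ∧ ∀ x : α, ∀ ε : NNReal, 0 < ε → ∃ s ∈ S, d x s < ε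

/-- A set is bounded if it is contained in a closed ball of positive radius. -/
def BoundedWith {α : Type*} (d : α → α → NNReal) (A : Set α) : Prop :=
  ∃ c : α, ∃ r : NNReal, 0 < r ∧ ∀ x ∈ A, d c x ≤ r

/-- A distance function is locally finite if every bounded set is finite. -/
def LocallyFiniteWith {α : Type*} (d : α → α → NNReal) : Prop :=
  ∀ A : Set α, BoundedWith d A → A.Finite

/-- A graph is a ray if its vertices can be enumerated without repetition as
`x₁, x₂, …` with edges exactly `{xₙ, xₙ₊₁}`. -/
def IsRay {W : Type*} (R : SimpleGraph W) : Prop :=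
  ∃ v : ℕ → W, Function.Bijective v ∧
    ∀ a b : W, R.Adj a b ↔ ∃ n : ℕ, (a = v n ∧ b = v (n + 1)) ∨ (a = v (n + 1) ∧ b = v n)

/-- A tree is a star graph if some vertex `c` (the center) is adjacent to every other vertex. -/
def IsStar {W : Type*} (S : SimpleGraph W) : Prop :=
  S.IsTree ∧ ∃ c : W, ∀ v : W, v ≠ c → S.Adj c v

/-!
A closed ball of `d_l` contains, with each of its points, the whole path of the tree from the
centre to that point, so it induces a connected subgraph. If the ball were infinite, Kőnig's lemma
would give either a vertex with infinitely many neighbours inside the ball or a ray inside the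
ball, that is, an infinite star or ray which is bounded for `d_l`. Since `d_l` is an
ultrametric up to distinct points at distance `0`, the star or ray is also contained in a closed
ball centred at one of its own vertices, so it is not locally finite.
-/

section LocallyFiniteWith

variable {α β : Type*} {d : α → α → NNReal}

theorem LocallyFiniteWith.comp_injective (hd : LocallyFiniteWith d) {f : β → α}
    (hf : Function.Injective f) : LocallyFiniteWith fun x y => d (f x) (f y) := by
  rintro A ⟨c, r, hr, hA⟩
  have himage : (f '' A).Finite := hd _ ⟨f c, r, hr, Set.forall_mem_image.2 hA⟩
  exact himage.of_finite_image hf.injOn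

theorem BoundedWith.finite_of_locallyFiniteWith_subtype {s : Set α} (hs : BoundedWith d s)
    (hcomm : ∀ x y, d x y = d y x) (hmax : ∀ x y z, d x z ≤ max (d x y) (d y z))
    (hfin : LocallyFiniteWith fun x y : s => d x y) : s.Finite := by
  obtain ⟨c, r, hr, hball⟩ := hs
  obtain rfl | ⟨a, ha⟩ := s.eq_empty_or_nonempty
  · exact Set.finite_empty
  have hcenter : ∀ x ∈ s, d a x ≤ r := fun x hx =>
    (hmax a c x).trans (max_le (hcomm a c ▸ hball a ha) (hball x hx))
  exact Set.finite_coe_iff.1 <| Set.finite_univ_iff.1 <|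
    hfin Set.univ ⟨⟨a, ha⟩, r, hr, fun x _ => hcenter x x.2⟩

end LocallyFiniteWith

section TreeDist

variable {V : Type*} {G : SimpleGraph V} (hG : G.IsTree) (l : V → NNReal) {u v w : V}

theorem treeDist_self (u : V) : treeDist G hG l u u = 0 :=
  if_pos rfl

theorem treeDist_eq_foldr_max {p : G.Walk u v} (hp : p.IsPath) (huv : u ≠ v) :
    treeDist G hG l u v = (p.support.map l).foldr max ⊥ := by
  have hpath := hG.existsUnique_path u v
  rw [treeDist, if_neg huv, hpath.unique hpath.choose_spec.1 hp, bot_eq_zero]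

variable {l} in
theorem treeDist_le_of_forall_mem_support {r : NNReal} (p : G.Walk u v)
    (hp : ∀ x ∈ p.support, l x ≤ r) : treeDist G hG l u v ≤ r := by
  classical
  obtain rfl | huv := eq_or_ne u v
  · simp only [treeDist_self, zero_le]
  · rw [treeDist_eq_foldr_max hG l p.bypass_isPath huv]
    exact List.max_le_of_forall_le _ _ <| List.forall_mem_map.2 fun x hx =>
      hp x (p.support_bypass_subset_support hx)

theorem le_treeDist_of_mem_support {p : G.Walk u v} (hp : p.IsPath) (huv : u ≠ v)
    (hw : w ∈ p.support) : l w ≤ treeDist G hG l u v := by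
  rw [treeDist_eq_foldr_max hG l hp huv]
  exact List.le_max_of_le (List.mem_map_of_mem hw) le_rfl

theorem treeDist_comm (u v : V) : treeDist G hG l u v = treeDist G hG l v u := by
  suffices hle : ∀ a b, treeDist G hG l a b ≤ treeDist G hG l b a from (hle u v).antisymm (hle v u)
  intro a b
  obtain rfl | hba := eq_or_ne b a
  · rfl
  obtain ⟨p, hp⟩ := (hG.existsUnique_path b a).exists
  refine treeDist_le_of_forall_mem_support hG p.reverse fun x hx => ?_
  rw [Walk.support_reverse, List.mem_reverse] at hx
  exact le_treeDist_of_mem_support hG l hp hba hx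

theorem treeDist_le_max (u v w : V) :
    treeDist G hG l u w ≤ max (treeDist G hG l u v) (treeDist G hG l v w) := by
  obtain rfl | huv := eq_or_ne u v
  · exact le_max_right _ _
  obtain rfl | hvw := eq_or_ne v w
  · exact le_max_left _ _
  obtain ⟨p, hp⟩ := (hG.existsUnique_path u v).exists
  obtain ⟨q, hq⟩ := (hG.existsUnique_path v w).exists
  refine treeDist_le_of_forall_mem_support hG (p.append q) fun x hx => ?_
  obtain hxp | hxq := (Walk.mem_support_append_iff p q).1 hx
  · exact le_max_of_le_left (le_treeDist_of_mem_support hG l hp huv hxp)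
  · exact le_max_of_le_right (le_treeDist_of_mem_support hG l hq hvw hxq)

theorem treeDist_le_treeDist_of_mem_support {p : G.Walk u v} (hp : p.IsPath)
    (hw : w ∈ p.support) : treeDist G hG l u w ≤ treeDist G hG l u v := by
  classical
  obtain rfl | huv := eq_or_ne u v
  · obtain rfl : w = u := by
      simpa only [(Walk.isPath_iff_nil.1 hp).eq_nil, Walk.support_nil, List.mem_singleton] using hw
    rfl
  · exact treeDist_le_of_forall_mem_support hG (p.takeUntil w hw) fun x hx =>
      le_treeDist_of_mem_support hG l hp huv (p.support_takeUntil_subset_support hw hx)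

theorem connected_induce_treeDist_le (c : V) (r : NNReal) :
    (G.induce {x | treeDist G hG l c x ≤ r}).Connected := by
  have hc : treeDist G hG l c c ≤ r := by simp only [treeDist_self, zero_le]
  refine induce_connected_of_patches c hc fun {x} hx => ?_
  obtain ⟨p, hp⟩ := (hG.existsUnique_path c x).exists
  exact ⟨{w | w ∈ p.support},
    fun w hw => (treeDist_le_treeDist_of_mem_support hG l hp hw).trans hx,
    p.start_mem_support, p.end_mem_support, p.connected_induce_support _ _⟩

end TreeDist

section Konig

variable {V : Type*} {G : SimpleGraph V}

/-- The geodesic order of a connected graph rooted at `c`: `x ≤ y` when some shortest path from `c`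
to `y` passes through `x`, expressed as equality in the triangle inequality for `G.dist`. It turns
Kőnig's lemma for graphs into Kőnig's lemma for strongly atomic orders. -/
abbrev geodesicOrder (hG : G.Connected) (c : V) : PartialOrder V where
  le x y := G.dist c x + G.dist x y = G.dist c y
  le_refl x := by rw [dist_self, add_zero]
  le_trans x y z hxy hyz := by
    have hxz : G.dist x z ≤ G.dist x y + G.dist y z := hG.dist_triangle
    have hcz : G.dist c z ≤ G.dist c x + G.dist x z := hG.dist_triangle
    omega
  le_antisymm x y hxy hyx := hG.dist_eq_zero_iff.1 (by omega)

variable (hG : G.Connected) {c x y : V}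

theorem geodesicOrder_covBy_of_adj_of_le (hadj : G.Adj x y) :
    letI := geodesicOrder hG c
    x ≤ y → x ⋖ y := by
  intro hxy
  let := geodesicOrder hG c
  refine ⟨lt_of_le_of_ne hxy hadj.ne, fun z hxz hzy => ?_⟩
  have hdist : G.dist x y = 1 := dist_eq_one_iff_adj.2 hadj
  have hxz_pos : 0 < G.dist x z := hG.pos_dist_of_ne hxz.ne
  have hzy_pos : 0 < G.dist z y := hG.pos_dist_of_ne hzy.ne
  have hxz_le : G.dist c x + G.dist x z = G.dist c z := hxz.le
  have hzy_le : G.dist c z + G.dist z y = G.dist c y := hzy.le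
  have hxy_le : G.dist c x + G.dist x y = G.dist c y := hxy
  omega

theorem geodesicOrder_exists_adj_of_lt :
    letI := geodesicOrder hG c
    x < y → ∃ z, G.Adj x z ∧ x ≤ z ∧ z ≤ y := by
  intro hxy
  let := geodesicOrder hG c
  obtain ⟨p, hp⟩ := hG.exists_walk_length_eq_dist x y
  cases p with
  | nil => exact absurd rfl hxy.ne
  | @cons _ z _ hadj q =>
    have hxy_le : G.dist c x + G.dist x y = G.dist c y := hxy.le
    have hxz : G.dist x z = 1 := dist_eq_one_iff_adj.2 hadj
    have hzy : G.dist z y ≤ q.length := dist_le q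
    have hcz : G.dist c z ≤ G.dist c x + G.dist x z := hG.dist_triangle
    have hcy : G.dist c y ≤ G.dist c z + G.dist z y := hG.dist_triangle
    rw [Walk.length_cons] at hp
    refine ⟨z, hadj, ?_, ?_⟩
    · change G.dist c x + G.dist x z = G.dist c z
      omega
    · change G.dist c z + G.dist z y = G.dist c y
      omega

theorem adj_of_geodesicOrder_covBy :
    letI := geodesicOrder hG c
    x ⋖ y → G.Adj x y := by
  intro hxy
  let := geodesicOrder hG c
  obtain ⟨z, hadj, hxz, hzy⟩ := geodesicOrder_exists_adj_of_lt hG hxy.lt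
  obtain rfl | rfl := hxy.eq_or_eq hxz hzy
  · exact absurd rfl hadj.ne
  · exact hadj

theorem isStronglyAtomic_geodesicOrder :
    letI := geodesicOrder hG c
    IsStronglyAtomic V := by
  let := geodesicOrder hG c
  refine ⟨fun x y hxy => ?_⟩
  obtain ⟨z, hadj, hxz, hzy⟩ := geodesicOrder_exists_adj_of_lt hG hxy
  exact ⟨z, geodesicOrder_covBy_of_adj_of_le hG hadj hxz, hzy⟩

theorem hasse_nat_isContained_of_forall_neighborSet_finite [Infinite V] (hG : G.Connected)
    (hfin : ∀ v, (G.neighborSet v).Finite) : hasse ℕ ⊑ G := by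
  obtain ⟨c⟩ := hG.nonempty
  let := geodesicOrder hG c
  have : IsStronglyAtomic V := isStronglyAtomic_geodesicOrder hG
  have hcovBy : ∀ x, {y | x ⋖ y}.Finite := fun x =>
    (hfin x).subset fun _ => adj_of_geodesicOrder_covBy hG
  have hle : ∀ x, c ≤ x := fun x => by
    change G.dist c c + G.dist c x = G.dist c x
    rw [dist_self, zero_add]
  have hIci : (Set.Ici c).Infinite := Set.infinite_univ.mono fun x _ => hle x
  obtain ⟨f, -, hf⟩ := exists_orderEmbedding_covby_of_forall_covby_finite hcovBy hIci
  have hadj : ∀ {m n : ℕ}, m ⋖ n → G.Adj (f m) (f n) := fun {m n} hmn => by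
    obtain rfl : m + 1 = n := Order.covBy_iff_add_one_eq.1 hmn
    exact adj_of_geodesicOrder_covBy hG (hf m)
  exact ⟨⟨f, fun h => h.elim hadj fun h => (hadj h).symm⟩, f.injective⟩

end Konig

section RaysAndStars

theorem isRay_of_iso_hasse_nat {W : Type*} {R : SimpleGraph W} (e : hasse ℕ ≃g R) : IsRay R := by
  refine ⟨e, e.bijective, e.surjective.forall₂.2 fun m n => ?_⟩
  simp only [e.map_adj_iff, hasse_adj, Order.covBy_iff_add_one_eq, e.injective.eq_iff]
  grind

theorem isStar_of_isAcyclic_of_isUniversal {W : Type*} {S : SimpleGraph W} {c : W}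
    (hS : S.IsAcyclic) (hc : S.IsUniversal c) : IsStar S :=
  ⟨⟨.of_isUniversal hc, hS⟩, c, fun _ hv => hc hv.symm⟩

variable {V : Type*} {G : SimpleGraph V}

theorem isStar_coe_induce_insert (hG : G.IsAcyclic) {v : V} {N : Set V}
    (hN : N ⊆ G.neighborSet v) : IsStar ((⊤ : G.Subgraph).induce (insert v N)).coe := by
  refine isStar_of_isAcyclic_of_isUniversal (c := ⟨v, Set.mem_insert v N⟩) (hG.subgraph _) ?_
  rintro ⟨w, hw⟩ hvw
  have hwN : w ∈ N := hw.resolve_left fun h => hvw (Subtype.ext h.symm)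
  exact ⟨Set.mem_insert v N, hw, hN hwN⟩

theorem exists_infinite_ray_or_star_of_connected_induce (hG : G.IsAcyclic) {s : Set V}
    (hs : (G.induce s).Connected) (hinf : s.Infinite) :
    ∃ H : G.Subgraph, (IsRay H.coe ∨ IsStar H.coe) ∧ H.verts ⊆ s ∧ H.verts.Infinite := by
  by_cases hfin : ∀ v, ((G.induce s).neighborSet v).Finite
  · have := hinf.to_subtype
    obtain ⟨f⟩ := hasse_nat_isContained_of_forall_neighborSet_finite hs hfin
    let ray : Copy (hasse ℕ) G := (Copy.induce G s).comp f
    have hverts : ray.toSubgraph.verts = Set.range ray := by simp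
    refine ⟨ray.toSubgraph, .inl (isRay_of_iso_hasse_nat ray.isoToSubgraph), ?_, ?_⟩
    · rw [hverts]
      exact Set.range_subset_iff.2 fun n => (f n).2
    · rw [hverts]
      exact Set.infinite_range_of_injective ray.injective
  · obtain ⟨v, hv⟩ := not_forall.1 hfin
    let N : Set V := (↑) '' (G.induce s).neighborSet v
    have hN : N ⊆ G.neighborSet v := Set.image_subset_iff.2 fun w hw => hw
    have hNinf : N.Infinite := Set.Infinite.image Subtype.val_injective.injOn hv
    exact ⟨(⊤ : G.Subgraph).induce (insert (v : V) N), .inr (isStar_coe_induce_insert hG hN),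
      Set.insert_subset v.2 (Subtype.coe_image_subset s _), hNinf.mono (Set.subset_insert _ _)⟩

end RaysAndStars

theorem locallyFinite_iff_rays_and_stars_general {V : Type*} (G : SimpleGraph V) (hG : G.IsTree)
    (l : V → NNReal) :
    LocallyFiniteWith (treeDist G hG l) ↔
      ∀ H : G.Subgraph, IsRay H.coe ∨ IsStar H.coe →
        LocallyFiniteWith (fun x y : H.verts => treeDist G hG l ↑x ↑y) := by
  refine ⟨fun h H _ => h.comp_injective Subtype.val_injective, ?_⟩
  rintro hsub A ⟨c, r, hr, hA⟩
  by_contra hAinf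
  have hball : {x | treeDist G hG l c x ≤ r}.Infinite := Set.Infinite.mono hA hAinf
  obtain ⟨H, hH, hHball, hHinf⟩ := exists_infinite_ray_or_star_of_connected_induce
    hG.isAcyclic (connected_induce_treeDist_le hG l c r) hball
  have hHbdd : BoundedWith (treeDist G hG l) H.verts := ⟨c, r, hr, hHball⟩
  exact hHinf <| hHbdd.finite_of_locallyFiniteWith_subtype
    (treeDist_comm hG l) (treeDist_le_max hG l) (hsub H hH)

theorem locallyFinite_iff_rays_and_stars {V : Type*} (G : SimpleGraph V) (hG : G.IsTree)
    (l : V → NNReal) (hl : Nondeg G l) :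
    LocallyFiniteWith (treeDist G hG l) ↔
      ∀ H : G.Subgraph, IsRay H.coe ∨ IsStar H.coe →
        LocallyFiniteWith (fun x y : H.verts => treeDist G hG l ↑x ↑y) :=
  locallyFinite_iff_rays_and_stars_general G hG l
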